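/- Let G = (V,E) be a finite connected undirected unweighted graph with m edges. For any two vertices i and j, the hitting time of the simple random walk satisfies h_{ij} = m·R_{ij} + (1/2)·Σ_{k∈V} deg(k)·(R_{jk} − R_{ik}), where R_{ab} denotes the effective resistance between a and b and deg(k) is the degree of vertex k. -/

import Mathlib

open Finset

variable {V : Type*}

/-- The total weight incident to a vertex: `ω(i) = Σ_l ω(i,l)`. -/
noncomputable def vWeight [Fintype V] (w : V → V → ℝ) (i : V) : ℝ :=
  ∑ l, w i l

/-- The total weight of the graph (each edge counted once): `ω(G)`. -/
noncomputable def gWeight [Fintype V] (w : V → V → ℝ) : ℝ :=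
  (∑ i, ∑ l, w i l) / 2

/-- Transition probabilities of the random walk on the weighted graph:
from `i`, move to `l` with probability `ω(i,l)/ω(i)`. -/
noncomputable def walkStep [Fintype V] (w : V → V → ℝ) (i l : V) : ℝ :=
  w i l / vWeight w i

/-- `w` is a system of positive symmetric edge weights on a finite connected undirected
graph: symmetric, nonnegative, zero on the diagonal (and on non-edges), and the graph
whose edges are the pairs with positive weight is connected. -/
def IsWeight [Fintype V] (w : V → V → ℝ) : Prop :=
  (∀ a b, w a b = w b a) ∧ (∀ a b, 0 ≤ w a b) ∧ (∀ a, w a a = 0) ∧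
    (∀ a b, Relation.ReflTransGen (fun x y => 0 < w x y) a b)

/-- `hitSurv p j n i` is the probability that the Markov chain with transition kernel `p`
started at `i` has not visited `j` at any of the times `0, 1, …, n`. -/
noncomputable def hitSurv {S : Type*} [Fintype S] [DecidableEq S] (p : S → S → ℝ) (j : S) :
    ℕ → S → ℝ
  | 0 => fun i => if i = j then 0 else 1
  | n + 1 => fun i => if i = j then 0 else ∑ l, p i l * hitSurv p j n l

/-- Expected hitting time of `j` from `i`: the expected number of steps for the chain
started at `i` to first reach `j`, computed as `Σ_n P(T_j > n)`. -/
noncomputable def hitTime {S : Type*} [Fintype S] [DecidableEq S] (p : S → S → ℝ)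
    (i j : S) : ℝ :=
  ∑' n : ℕ, hitSurv p j n i

/-- A unit-current potential from `i` to `j`: Kirchhoff's equations when a unit current
enters at `i` and leaves at `j`. -/
def IsUnitPotential [Fintype V] (w : V → V → ℝ) (i j : V) (φ : V → ℝ) : Prop :=
  (∀ k, k ≠ i → k ≠ j → ∑ l, w k l * (φ k - φ l) = 0) ∧
    (∑ l, w i l * (φ i - φ l) = 1) ∧
    (∑ l, w j l * (φ j - φ l) = -1)

/-- `R` is the effective-resistance matrix of the weighted graph `w`:
`R a a = 0`, and for `a ≠ b`, `R a b = V_a - V_b` for a unit-current potential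
from `a` to `b`. -/
def IsResistance [Fintype V] (w : V → V → ℝ) (R : V → V → ℝ) : Prop :=
  (∀ a, R a a = 0) ∧
    ∀ a b, a ≠ b → ∃ φ, IsUnitPotential w a b φ ∧ R a b = φ a - φ b

/-- The weight function of an unweighted graph: weight `1` on edges, `0` elsewhere. -/
noncomputable def aw (G : SimpleGraph V) [DecidableRel G.Adj] (a b : V) : ℝ :=
  if G.Adj a b then 1 else 0

/-- Probability of a given trajectory: `trajProb p i xs` is the probability that the
chain started at `i` successively visits the vertices of the list `xs`. -/
noncomputable def trajProb {S : Type*} [Fintype S] (p : S → S → ℝ) : S → List S → ℝ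
  | _, [] => 1
  | i, x :: xs => p i x * trajProb p x xs

/-- Probability that the walk started at `i` has not visited every vertex by time `n`. -/
noncomputable def notCoveredProb [Fintype V] [DecidableEq V] (p : V → V → ℝ) (n : ℕ)
    (i : V) : ℝ :=
  ∑ xs : Fin n → V, trajProb p i (List.ofFn xs) *
    (if (i :: List.ofFn xs).toFinset = Finset.univ then 0 else 1)

/-- The cover time from `i`: the expected number of steps for the walk started at `i`
to have visited every vertex, computed as `Σ_n P(T_cov > n)`. -/
noncomputable def coverTime [Fintype V] [DecidableEq V] (p : V → V → ℝ) (i : V) : ℝ :=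
  ∑' n : ℕ, notCoveredProb p n i

/-- `visitSurv p j k n i` is the probability that the chain started at `i` is at `k` at
time `n` without having visited `j` at any of the times `0, …, n`. -/
noncomputable def visitSurv [Fintype V] [DecidableEq V] (p : V → V → ℝ) (j k : V) :
    ℕ → V → ℝ
  | 0 => fun i => if i = j then 0 else if i = k then 1 else 0
  | n + 1 => fun i => if i = j then 0 else ∑ l, p i l * visitSurv p j k n l

/-- `expVisits p i j k` is the expected number of visits to `k` (counting time `0`) of
the chain started at `i` strictly before its first visit to `j`. -/
noncomputable def expVisits [Fintype V] [DecidableEq V] (p : V → V → ℝ) (i j k : V) : ℝ :=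
  ∑' n : ℕ, visitSurv p j k n i

/-- `reachBeforeAux p i j n l` is the probability that the walk started at `l` reaches `j`
within `n` steps without visiting `i` first. -/
noncomputable def reachBeforeAux [Fintype V] [DecidableEq V] (p : V → V → ℝ) (i j : V) :
    ℕ → V → ℝ
  | 0 => fun l => if l = j then 1 else 0
  | n + 1 => fun l =>
      if l = j then 1 else if l = i then 0 else ∑ m, p l m * reachBeforeAux p i j n m

/-- The probability that the walk started at `i` reaches `j` before returning to `i`:
one step from `i` to `l`, then reach `j` before `i` (monotone limit in `n`). -/
noncomputable def escapeProb [Fintype V] [DecidableEq V] (p : V → V → ℝ) (i j : V) : ℝ :=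
  ∑ l, p i l * ⨆ n, reachBeforeAux p i j n l

/-- `hitSurvSet p F n x` is the probability that the chain started at `x` has not visited
the set `F` at any of the times `0, …, n`. -/
noncomputable def hitSurvSet {S : Type*} [Fintype S] (p : S → S → ℝ) (F : S → Prop)
    [DecidablePred F] : ℕ → S → ℝ
  | 0 => fun x => if F x then 0 else 1
  | n + 1 => fun x => if F x then 0 else ∑ y, p x y * hitSurvSet p F n y

/-- Expected hitting time of the set `F` from `x`, computed as `Σ_n P(T_F > n)`. -/
noncomputable def hitTimeSet {S : Type*} [Fintype S] (p : S → S → ℝ) (F : S → Prop)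
    [DecidablePred F] (x : S) : ℝ :=
  ∑' n : ℕ, hitSurvSet p F n x

/-- The associated chain `𝒢` on pairs `(P, i)` (visited set, current vertex): from
`(P, i)` it moves to `(P ∪ {j}, j)` with probability `ω(i,j)/ω(i)`. -/
noncomputable def pairStep [Fintype V] [DecidableEq V] (w : V → V → ℝ)
    (s t : Finset V × V) : ℝ :=
  if t.1 = insert t.2 s.1 then walkStep w s.2 t.2 else 0

/-- `exitProbAux p P j n i` is the probability that the walk started at `i` leaves `P`
within `n` steps and that the first vertex visited outside `P` is `j`. -/
noncomputable def exitProbAux [Fintype V] [DecidableEq V] (p : V → V → ℝ) (P : Finset V)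
    (j : V) : ℕ → V → ℝ
  | 0 => fun i => if i ∈ P then 0 else if i = j then 1 else 0
  | n + 1 => fun i =>
      if i ∈ P then ∑ l, p i l * exitProbAux p P j n l else if i = j then 1 else 0

/-- The probability that the first vertex outside `P` visited by the walk started at `i`
is `j` (monotone limit in the number of allowed steps). -/
noncomputable def exitProb [Fintype V] [DecidableEq V] (p : V → V → ℝ) (P : Finset V)
    (i j : V) : ℝ :=
  ⨆ n, exitProbAux p P j n i

/-- The negated weighted Laplacian `Δ` of the weighted graph `w` on `Fin n`. -/
noncomputable def negLaplacian (n : ℕ) (w : Fin n → Fin n → ℝ) :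
    Matrix (Fin n) (Fin n) ℝ :=
  Matrix.of fun k l => if k = l then -(∑ m, w k m) else w k l

/-- `Δ₂`: the negated weighted Laplacian with its first row replaced by the first row of
the identity matrix. -/
noncomputable def delta2 (n : ℕ) (hn : 0 < n) (w : Fin n → Fin n → ℝ) :
    Matrix (Fin n) (Fin n) ℝ :=
  (negLaplacian n w).updateRow ⟨0, hn⟩ (fun l => if l = ⟨0, hn⟩ then 1 else 0)

/-- The weight function obtained from `w` by adding weight `u` on the edge `{a, b}`. -/
noncomputable def addEdge [DecidableEq V] (w : V → V → ℝ) (a b : V) (u : ℝ)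
    (x y : V) : ℝ :=
  w x y + (if (x = a ∧ y = b) ∨ (x = b ∧ y = a) then u else 0)

/-- The Laplacian of the weighted graph `w`: `(L f)(k) = Σ_l w(k,l)·(f(k) − f(l))`. -/
noncomputable def weightLaplacian [Fintype V] (w : V → V → ℝ) (f : V → ℝ) (k : V) : ℝ :=
  ∑ l, w k l * (f k - f l)

section Laplacian

variable [Fintype V] {w : V → V → ℝ}

theorem weightLaplacian_sub (f g : V → ℝ) (k : V) :
    weightLaplacian w (fun x => f x - g x) k =
      weightLaplacian w f k - weightLaplacian w g k := by
  simp only [weightLaplacian, ← Finset.sum_sub_distrib]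
  exact Finset.sum_congr rfl fun l _ => by ring

theorem weightLaplacian_sub_const (f : V → ℝ) (c : ℝ) (k : V) :
    weightLaplacian w (fun x => f x - c) k = weightLaplacian w f k := by
  simp [weightLaplacian]

theorem weightLaplacian_sum_mul {ι : Type*} (s : Finset ι) (c : ι → ℝ) (f : ι → V → ℝ) (k : V) :
    weightLaplacian w (fun x => ∑ a ∈ s, c a * f a x) k =
      ∑ a ∈ s, c a * weightLaplacian w (f a) k := by
  simp only [weightLaplacian, ← Finset.sum_sub_distrib, Finset.mul_sum]
  rw [Finset.sum_comm]
  exact Finset.sum_congr rfl fun a _ => Finset.sum_congr rfl fun l _ => by ring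

/-- The Laplacian of a symmetric weight is self-adjoint. -/
theorem sum_weightLaplacian_mul_comm (hw : ∀ a b, w a b = w b a) (f g : V → ℝ) :
    ∑ k, weightLaplacian w f k * g k = ∑ k, f k * weightLaplacian w g k := by
  simp only [weightLaplacian, mul_sub, sub_mul, Finset.sum_sub_distrib, Finset.sum_mul,
    Finset.mul_sum]
  congr 1
  · exact Finset.sum_congr rfl fun k _ => Finset.sum_congr rfl fun l _ => by ring
  · rw [Finset.sum_comm]
    exact Finset.sum_congr rfl fun k _ => Finset.sum_congr rfl fun l _ => by
      rw [hw l k]; ring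

/-- Minimum principle: a function superharmonic off `j` attains its minimum at `j`. -/
theorem IsWeight.le_of_weightLaplacian_nonneg (hw : IsWeight w) {j : V} {f : V → ℝ}
    (hf : ∀ k, k ≠ j → 0 ≤ weightLaplacian w f k) (k : V) : f j ≤ f k := by
  obtain ⟨-, hnn, -, hconn⟩ := hw
  have : Nonempty V := ⟨j⟩
  obtain ⟨x₀, hx₀⟩ := Finite.exists_min f
  refine le_trans ?_ (hx₀ k)
  by_contra! hlt
  have hconst : f j = f x₀ := by
    refine Relation.ReflTransGen.trans_induction_on
      (motive := fun {a b} _ => f a = f x₀ → f b = f x₀) (hconn x₀ j) (fun _ h => h) ?_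
      (fun _ _ h₁ h₂ h => h₂ (h₁ h)) rfl
    intro x y hxy hx
    have hterm : ∀ l ∈ Finset.univ, w x l * (f x - f l) ≤ 0 := fun l _ =>
      mul_nonpos_of_nonneg_of_nonpos (hnn x l) (by linarith [hx₀ l])
    have hxj : x ≠ j := by rintro rfl; linarith
    have hsum : ∑ l, w x l * (f x - f l) = 0 :=
      le_antisymm (Finset.sum_nonpos hterm) (hf x hxj)
    have hy := (Finset.sum_eq_zero_iff_of_nonpos hterm).1 hsum y (Finset.mem_univ y)
    rcases mul_eq_zero.1 hy with h | h
    · exact absurd h hxy.ne'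
    · linarith
  linarith

theorem IsWeight.vWeight_pos (hw : IsWeight w) {k j : V} (hkj : k ≠ j) : 0 < vWeight w k := by
  obtain ⟨-, hnn, -, hconn⟩ := hw
  obtain rfl | ⟨l, hl, -⟩ := Relation.ReflTransGen.cases_head (hconn k j)
  · exact absurd rfl hkj
  · exact Finset.sum_pos' (fun x _ => hnn k x) ⟨l, Finset.mem_univ l, hl⟩

theorem weightLaplacian_eq_vWeight_mul {f : V → ℝ} {k : V} (hk : vWeight w k ≠ 0) :
    weightLaplacian w f k = vWeight w k * (f k - ∑ l, walkStep w k l * f l) := by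
  have h : vWeight w k * ∑ l, walkStep w k l * f l = ∑ l, w k l * f l := by
    rw [Finset.mul_sum]
    exact Finset.sum_congr rfl fun l _ => by rw [walkStep]; field_simp
  rw [mul_sub, h]
  simp only [weightLaplacian, vWeight, mul_sub, Finset.sum_sub_distrib, Finset.sum_mul]

variable [DecidableEq V]

theorem hitSurv_self (p : V → V → ℝ) (j : V) (n : ℕ) : hitSurv p j n j = 0 := by
  cases n <;> simp [hitSurv]

theorem hitSurv_nonneg {p : V → V → ℝ} (hp : ∀ a b, 0 ≤ p a b) (j : V) (n : ℕ) (i : V) :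
    0 ≤ hitSurv p j n i := by
  induction n generalizing i with
  | zero => simp only [hitSurv]; split_ifs <;> norm_num
  | succ n ih =>
    simp only [hitSurv]
    split_ifs
    · exact le_rfl
    · exact Finset.sum_nonneg fun l _ => mul_nonneg (hp i l) (ih l)

/-- The hitting time of `j` is the unique solution of `L h = ω` off `j` with `h j = 0`. -/
theorem IsWeight.hitTime_eq (hw : IsWeight w) {j : V} {h : V → ℝ} (hj : h j = 0)
    (hL : ∀ k, k ≠ j → weightLaplacian w h k = vWeight w k) (i : V) :
    hitTime (walkStep w) i j = h i := by
  have hpos : ∀ k, k ≠ j → 0 < vWeight w k := fun k hk => hw.vWeight_pos hk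
  have hp : ∀ a b, 0 ≤ walkStep w a b := fun a b =>
    div_nonneg (hw.2.1 a b) (Finset.sum_nonneg fun l _ => hw.2.1 a l)
  have hnn : ∀ k, 0 ≤ h k := fun k => by
    rw [← hj]
    exact hw.le_of_weightLaplacian_nonneg (fun k hk => by rw [hL k hk]; exact (hpos k hk).le) k
  have hstep : ∀ k, k ≠ j → h k = 1 + ∑ l, walkStep w k l * h l := fun k hk => by
    have e := hL k hk
    rw [weightLaplacian_eq_vWeight_mul (hpos k hk).ne'] at e
    have := mul_left_cancel₀ (hpos k hk).ne' (e.trans (mul_one _).symm)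
    linarith
  have hbound : ∀ N k, ∑ n ∈ Finset.range N, hitSurv (walkStep w) j n k ≤ h k := by
    intro N
    induction N with
    | zero => simpa using hnn
    | succ N ih =>
      intro k
      by_cases hk : k = j
      · subst hk; simp [hitSurv_self, hj]
      · rw [Finset.sum_range_succ']
        simp only [hitSurv, if_neg hk]
        rw [Finset.sum_comm, hstep k hk, add_comm]
        simp only [← Finset.mul_sum]
        gcongr with l
        · exact hp k l
        · exact ih l
  have hsummable : ∀ k, Summable fun n => hitSurv (walkStep w) j n k := fun k =>
    summable_of_sum_range_le (fun n => hitSurv_nonneg hp j n k) fun N => hbound N k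
  set s : V → ℝ := fun k => hitTime (walkStep w) k j with hs
  have hsj : s j = 0 := by simp [hs, hitTime, hitSurv_self]
  have hsL : ∀ k, k ≠ j → weightLaplacian w s k = vWeight w k := fun k hk => by
    have e : s k = 1 + ∑ l, walkStep w k l * s l := by
      simp only [hs, hitTime]
      rw [(hsummable k).tsum_eq_zero_add]
      simp only [hitSurv, if_neg hk]
      rw [Summable.tsum_finsetSum fun l _ => (hsummable l).mul_left _]
      simp only [tsum_mul_left]
    rw [weightLaplacian_eq_vWeight_mul (hpos k hk).ne', e]
    ring
  have h₁ := hw.le_of_weightLaplacian_nonneg (j := j) (f := fun x => s x - h x)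
    (fun k hk => by rw [weightLaplacian_sub, hsL k hk, hL k hk, sub_self]) i
  have h₂ := hw.le_of_weightLaplacian_nonneg (j := j) (f := fun x => h x - s x)
    (fun k hk => by rw [weightLaplacian_sub, hsL k hk, hL k hk, sub_self]) i
  simp only [hsj, hj] at h₁ h₂
  change s i = h i
  linarith

theorem IsResistance.exists_potential {R : V → V → ℝ} (hR : IsResistance w R) (a b : V) :
    ∃ φ : V → ℝ, (∀ k, weightLaplacian w φ k =
      (if k = a then 1 else 0) - (if k = b then 1 else 0)) ∧ R a b = φ a - φ b := by
  by_cases hab : a = b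
  · subst hab
    exact ⟨0, by simp [weightLaplacian], by simp [hR.1]⟩
  · obtain ⟨φ, ⟨h₀, ha, hb⟩, hφ⟩ := hR.2 a b hab
    refine ⟨φ, fun k => ?_, hφ⟩
    by_cases hka : k = a
    · subst hka; simpa [weightLaplacian, hab] using ha
    by_cases hkb : k = b
    · subst hkb; simpa [weightLaplacian, hka] using hb
    · simpa [weightLaplacian, hka, hkb] using h₀ k hka hkb

/-- Tetali's formula on a weighted graph. -/
theorem IsWeight.hitTime_eq_resistance (hw : IsWeight w) {R : V → V → ℝ}
    (hR : IsResistance w R) (i j : V) :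
    hitTime (walkStep w) i j =
      gWeight w * R i j + (1 / 2) * ∑ k, vWeight w k * (R j k - R i k) := by
  choose φ hφ hRφ using hR.exists_potential
  have hpair : ∀ (f g : V → ℝ) (a b c d : V),
      (∀ k, weightLaplacian w f k = (if k = a then 1 else 0) - (if k = b then 1 else 0)) →
      (∀ k, weightLaplacian w g k = (if k = c then 1 else 0) - (if k = d then 1 else 0)) →
      g a - g b = f c - f d := by
    intro f g a b c d hf hg
    have := sum_weightLaplacian_mul_comm hw.1 f g
    simpa [hf, hg, sub_mul, mul_sub, Finset.sum_sub_distrib] using this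
  have hsymm : ∀ a b, φ a j b - φ a j j = φ b j a - φ b j j := fun a b =>
    hpair _ _ _ _ _ _ (hφ b j) (hφ a j)
  have hpolar : ∀ a b, R a b = R a j + R b j - 2 * (φ b j a - φ b j j) := fun a b => by
    have := hpair (φ a b) (fun x => φ a j x - φ b j x) a b a b (hφ a b) fun k => by
      rw [weightLaplacian_sub, hφ, hφ]; ring
    rw [hRφ a b, ← this, hRφ a j, hRφ b j]
    linarith [hsymm a b]
  have hRj : ∀ k, R j k = R k j := fun k => by
    rw [hpolar j k, hR.1 j]; ring
  rw [hw.hitTime_eq (h := fun x => (∑ k, vWeight w k * φ k j x) - ∑ k, vWeight w k * φ k j j)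
    (sub_self _)]
  · have hg : gWeight w * R i j = (1 / 2) * ∑ k, vWeight w k * R i j := by
      rw [gWeight, ← Finset.sum_mul]
      simp only [vWeight]
      ring
    rw [hg, ← Finset.sum_sub_distrib, ← mul_add, ← Finset.sum_add_distrib, Finset.mul_sum]
    refine Finset.sum_congr rfl fun k _ => ?_
    rw [hRj k, hpolar i k]
    ring
  · intro k hk
    rw [weightLaplacian_sub_const, weightLaplacian_sum_mul]
    simp [hφ, hk]

end Laplacian

theorem isWeight_aw [Fintype V] {G : SimpleGraph V} [DecidableRel G.Adj] (hG : G.Connected) :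
    IsWeight (aw G) := by
  refine ⟨fun a b => by simp [aw, G.adj_comm], fun a b => ?_, fun a => by simp [aw],
    fun a b => ?_⟩
  · unfold aw; split_ifs <;> norm_num
  · refine Relation.ReflTransGen.mono (fun x y h => ?_) a b
      ((SimpleGraph.reachable_iff_reflTransGen a b).1 (hG.preconnected a b))
    simp [aw, h]

theorem vWeight_aw [Fintype V] (G : SimpleGraph V) [DecidableRel G.Adj] (k : V) :
    vWeight (aw G) k = G.degree k := by
  simp [vWeight, aw, ← SimpleGraph.card_neighborFinset_eq_degree,
    SimpleGraph.neighborFinset_eq_filter]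

theorem gWeight_aw [Fintype V] [DecidableEq V] (G : SimpleGraph V) [DecidableRel G.Adj] :
    gWeight (aw G) = G.edgeFinset.card := by
  have h : ∑ k, vWeight (aw G) k = 2 * (G.edgeFinset.card : ℝ) := by
    simp only [vWeight_aw]
    exact_mod_cast G.sum_degrees_eq_twice_card_edges
  change (∑ k, vWeight (aw G) k) / 2 = _
  rw [h]
  ring

/-- Tetali's formula on an unweighted connected graph:
`h_{ij} = m·R_{ij} + (1/2)·Σ_k deg(k)·(R_{jk} − R_{ik})`. -/
theorem tetali_hitting_time_formula
    {V : Type*} [Fintype V] [DecidableEq V] (G : SimpleGraph V) [DecidableRel G.Adj]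
    (hG : G.Connected) (R : V → V → ℝ) (hR : IsResistance (aw G) R) (i j : V) :
    hitTime (walkStep (aw G)) i j =
      (G.edgeFinset.card : ℝ) * R i j +
        (1 / 2) * ∑ k, (G.degree k : ℝ) * (R j k - R i k) := by
  rw [(isWeight_aw hG).hitTime_eq_resistance hR, gWeight_aw]
  simp only [vWeight_aw]
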